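/- The homomorphism ρ induces an isomorphism of ℂ-algebras from ℂ[X_{j,a} : (j,a) ∈ I]/(L + SR_Q) onto ℂ[ℤ^N]/J, sending the class of X_{j,a} to the class of exp(λ_{j,a}) · single(v_{j,a}). Here L is the ideal generated by the linear-equivalence relations X_{j,a} − X_{n_a+1,a} for 1 ≤ j ≤ n_a and 1 ≤ a ≤ l; SR_Q is the ideal generated by the quantum Stanley–Reisner relations ∏_{j=1}^{n_a+1} X_{j,a} − q_a for 1 ≤ a ≤ l; and J is the ideal of ℂ[ℤ^N] generated by the N logarithmic derivatives of the superpotential W = Σ_{(j,a) ∈ I} exp(λ_{j,a}) · single(v_{j,a}), namely the elements Σ_{(j,a) ∈ I} v_{j,a}^μ · exp(λ_{j,a}) · single(v_{j,a}) for the N coordinates μ of ℤ^N. (This realizes, via the SYZ mirror transformation, the isomorphism between the presentation of the small quantum cohomology ring of ℙ^{n_1} × ⋯ × ℙ^{n_l} and the Jacobian ring of its mirror superpotential.) -/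

import Mathlib

/-- The primitive ray generators of the fan of `ℙ^{n₁} × ⋯ × ℙ^{n_l}`, indexed by
`I = Σ a : Fin l, Fin (n a + 1)`: in the `a`-th block, `v_{j,a}` is the `j`-th
standard basis vector for `j ≤ n_a`, and `v_{n_a+1,a} = −(e₁ + ⋯ + e_{n_a})`. -/
def rayGen {l : ℕ} (n : Fin l → ℕ) (p : Σ a : Fin l, Fin (n a + 1)) :
    ∀ a : Fin l, Fin (n a) → ℤ := fun b m =>
  if b = p.1 then
    (if (p.2 : ℕ) = n p.1 then -1 else if (m : ℕ) = (p.2 : ℕ) then 1 else 0)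
  else 0

/-- The ideal `L` of linear-equivalence relations `X_{j,a} − X_{n_a+1,a}`. -/
noncomputable def Lideal (l : ℕ) (n : Fin l → ℕ) :
    Ideal (MvPolynomial (Σ a : Fin l, Fin (n a + 1)) ℂ) :=
  Ideal.span {f | ∃ (a : Fin l) (j : Fin (n a)),
    f = MvPolynomial.X (⟨a, j.castSucc⟩ : Σ a : Fin l, Fin (n a + 1))
        - MvPolynomial.X (⟨a, Fin.last (n a)⟩ : Σ a : Fin l, Fin (n a + 1))}

/-- The quantum Stanley–Reisner ideal `SR_Q`, generated by
`∏_{j=1}^{n_a+1} X_{j,a} − q_a` with `q_a = exp(Σ_j λ_{j,a})`. -/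
noncomputable def SRQideal (l : ℕ) (n : Fin l → ℕ)
    (lam : (Σ a : Fin l, Fin (n a + 1)) → ℝ) :
    Ideal (MvPolynomial (Σ a : Fin l, Fin (n a + 1)) ℂ) :=
  Ideal.span (Set.range fun a : Fin l =>
    (∏ j : Fin (n a + 1), MvPolynomial.X (⟨a, j⟩ : Σ a : Fin l, Fin (n a + 1)))
      - MvPolynomial.C ((Real.exp (∑ j : Fin (n a + 1), lam ⟨a, j⟩) : ℝ) : ℂ))

/-- The ideal `J` of `ℂ[ℤ^N]` generated by the `N` logarithmic derivatives of the
superpotential `W = Σ_{(j,a)} exp(λ_{j,a}) · single (v_{j,a})`, namely the elements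
`Σ_{(j,a)} v_{j,a}^μ · exp(λ_{j,a}) · single (v_{j,a})` for the `N` coordinates `μ`. -/
noncomputable def Jideal (l : ℕ) (n : Fin l → ℕ)
    (lam : (Σ a : Fin l, Fin (n a + 1)) → ℝ) :
    Ideal (AddMonoidAlgebra ℂ (∀ a : Fin l, Fin (n a) → ℤ)) :=
  Ideal.span {f | ∃ (b : Fin l) (m : Fin (n b)),
    f = ∑ p : Σ a : Fin l, Fin (n a + 1),
      AddMonoidAlgebra.single (rayGen n p)
        ((rayGen n p b m : ℂ) * ((Real.exp (lam p) : ℝ) : ℂ))}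

theorem rayGen_castSucc {l : ℕ} (n : Fin l → ℕ) (a : Fin l) (m : Fin (n a)) (b : Fin l)
    (k : Fin (n b)) : rayGen n ⟨a, m.castSucc⟩ b k =
      (Pi.single a (Pi.single m 1) : ∀ a : Fin l, Fin (n a) → ℤ) b k := by
  have hm := m.2
  unfold rayGen
  by_cases h : b = a
  · subst h
    have : ¬ ((m : ℕ) = n b) := by omega
    simp [this, Pi.single_apply, Fin.ext_iff]
  · simp [h]

theorem rayGen_last {l : ℕ} (n : Fin l → ℕ) (a : Fin l) (b : Fin l)
    (k : Fin (n b)) : rayGen n ⟨a, Fin.last _⟩ b k = if b = a then -1 else 0 := by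
  simp [rayGen]

theorem sum_rayGen {l : ℕ} (n : Fin l → ℕ) (a : Fin l) :
    ∑ j : Fin (n a + 1), rayGen n ⟨a, j⟩ = 0 := by
  funext b k
  rw [Fin.sum_univ_castSucc]
  simp only [Pi.add_apply, Finset.sum_apply, rayGen_castSucc, rayGen_last, Pi.zero_apply]
  by_cases h : b = a
  · subst h
    simp [Pi.single_apply]
  · simp [h]

theorem hom_ext_ray {l : ℕ} (n : Fin l → ℕ) {M : Type*} [CommMonoid M]
    (f g : Multiplicative (∀ a : Fin l, Fin (n a) → ℤ) →* M)
    (h : ∀ (a : Fin l) (m : Fin (n a)),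
      f (Multiplicative.ofAdd (rayGen n ⟨a, m.castSucc⟩)) =
      g (Multiplicative.ofAdd (rayGen n ⟨a, m.castSucc⟩))) : f = g := by
  have key : MonoidHom.toAdditiveRight f = MonoidHom.toAdditiveRight g := by
    refine AddMonoidHom.functions_ext _ _ _ fun a x => ?_
    have key2 : (MonoidHom.toAdditiveRight f).comp
          (AddMonoidHom.single (fun a : Fin l => Fin (n a) → ℤ) a) =
        (MonoidHom.toAdditiveRight g).comp
          (AddMonoidHom.single (fun a : Fin l => Fin (n a) → ℤ) a) := by
      refine AddMonoidHom.functions_ext _ _ _ fun m y => ?_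
      have key3 : ((MonoidHom.toAdditiveRight f).comp
          (AddMonoidHom.single (fun a : Fin l => Fin (n a) → ℤ) a)).comp
            (AddMonoidHom.single (fun _ : Fin (n a) => ℤ) m) =
        ((MonoidHom.toAdditiveRight g).comp
          (AddMonoidHom.single (fun a : Fin l => Fin (n a) → ℤ) a)).comp
            (AddMonoidHom.single (fun _ : Fin (n a) => ℤ) m) := by
        refine AddMonoidHom.ext_int ?_
        have e : rayGen n ⟨a, m.castSucc⟩ = Pi.single a (Pi.single m 1) := by
          funext b k; exact rayGen_castSucc n a m b k
        have := h a m
        rw [e] at this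
        exact congrArg Additive.ofMul this
      exact DFunLike.congr_fun key3 y
    exact DFunLike.congr_fun key2 x
  exact MonoidHom.toAdditiveRight.injective key

theorem J_gen {l : ℕ} (n : Fin l → ℕ) (lam : (Σ a : Fin l, Fin (n a + 1)) → ℝ)
    (b : Fin l) (m : Fin (n b)) :
    (∑ p : Σ a : Fin l, Fin (n a + 1),
      AddMonoidAlgebra.single (rayGen n p)
        ((rayGen n p b m : ℂ) * ((Real.exp (lam p) : ℝ) : ℂ))) =
    AddMonoidAlgebra.single (rayGen n ⟨b, m.castSucc⟩) ((Real.exp (lam ⟨b, m.castSucc⟩) : ℝ) : ℂ)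
    - AddMonoidAlgebra.single (rayGen n ⟨b, Fin.last _⟩)
        ((Real.exp (lam ⟨b, Fin.last _⟩) : ℝ) : ℂ) := by
  rw [Fintype.sum_sigma, Finset.sum_eq_single b, Fin.sum_univ_castSucc, Finset.sum_eq_single m,
    rayGen_castSucc, rayGen_last]
  · simp [sub_eq_add_neg, AddMonoidAlgebra.single_neg]
  · intro j _ hj
    rw [rayGen_castSucc]
    simp [Pi.single_apply, hj.symm]
  · simp
  · intro a _ ha
    refine Finset.sum_eq_zero fun j _ => ?_
    simp [rayGen, ha.symm]
  · simp

theorem prod_ray {l : ℕ} (n : Fin l → ℕ) (lam : (Σ a : Fin l, Fin (n a + 1)) → ℝ)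
    (a : Fin l) :
    ∏ j : Fin (n a + 1), (AddMonoidAlgebra.single (rayGen n ⟨a, j⟩)
      ((Real.exp (lam ⟨a, j⟩) : ℝ) : ℂ)) =
    algebraMap ℂ (AddMonoidAlgebra ℂ (∀ a : Fin l, Fin (n a) → ℤ))
      ((Real.exp (∑ j : Fin (n a + 1), lam ⟨a, j⟩) : ℝ) : ℂ) := by
  rw [AddMonoidAlgebra.prod_single, sum_rayGen, Real.exp_sum]
  simp

/-- The monoid homomorphism from `ℤ^N` attached to a family of units. -/
def unitHom {l : ℕ} (n : Fin l → ℕ) {A : Type*} [CommRing A] (u : ∀ a : Fin l, Fin (n a) → Aˣ) :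
    Multiplicative (∀ a : Fin l, Fin (n a) → ℤ) →* A :=
  (Units.coeHom A).comp
  { toFun := fun v => ∏ a, ∏ m, u a m ^ (v.toAdd a m)
    map_one' := by simp
    map_mul' := fun v w => by simp [zpow_add, Finset.prod_mul_distrib] }

theorem unitHom_castSucc {l : ℕ} (n : Fin l → ℕ) {A : Type*} [CommRing A]
    (u : ∀ a : Fin l, Fin (n a) → Aˣ) (a : Fin l) (m : Fin (n a)) :
    unitHom n u (Multiplicative.ofAdd (rayGen n ⟨a, m.castSucc⟩)) = u a m := by
  simp only [unitHom, MonoidHom.comp_apply, MonoidHom.coe_mk, OneHom.coe_mk, toAdd_ofAdd,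
    Units.coeHom_apply, rayGen_castSucc]
  congr 1
  rw [Finset.prod_eq_single a, Finset.prod_eq_single m]
  · simp
  · intro k _ hk
    simp [hk]
  · simp
  · intro b _ hb
    simp [hb]
  · simp

theorem exists_lift {l : ℕ} (n : Fin l → ℕ) (lam : (Σ a : Fin l, Fin (n a + 1)) → ℝ)
    {A : Type*} [CommRing A] [Algebra ℂ A] (x : (Σ a : Fin l, Fin (n a + 1)) → A)
    (hx : ∀ a, ∏ j, x ⟨a, j⟩ =
      algebraMap ℂ A ((Real.exp (∑ j : Fin (n a + 1), lam ⟨a, j⟩) : ℝ) : ℂ)) :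
    ∃ F : AddMonoidAlgebra ℂ (∀ a : Fin l, Fin (n a) → ℤ) →ₐ[ℂ] A,
      ∀ p, F (AddMonoidAlgebra.single (rayGen n p) ((Real.exp (lam p) : ℝ) : ℂ)) = x p := by
  have hE : ∀ r : ℝ, IsUnit (algebraMap ℂ A ((Real.exp r : ℝ) : ℂ)) := fun r =>
    (IsUnit.mk0 _ (by exact_mod_cast (Real.exp_pos r).ne')).map _
  have hu : ∀ p, IsUnit (x p) := by
    rintro ⟨a, j⟩
    have := hE (∑ j : Fin (n a + 1), lam ⟨a, j⟩)
    rw [← hx] at this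
    exact isUnit_of_dvd_unit (Finset.dvd_prod_of_mem (fun j => x ⟨a, j⟩) (Finset.mem_univ j)) this
  let u : ∀ a : Fin l, Fin (n a) → Aˣ := fun a m =>
    (hE (lam ⟨a, m.castSucc⟩)).unit⁻¹ * (hu ⟨a, m.castSucc⟩).unit
  let F := AddMonoidAlgebra.lift ℂ A (∀ a : Fin l, Fin (n a) → ℤ) (unitHom n u)
  have hc : ∀ (a : Fin l) (m : Fin (n a)), F (AddMonoidAlgebra.single
      (rayGen n ⟨a, m.castSucc⟩) ((Real.exp (lam ⟨a, m.castSucc⟩) : ℝ) : ℂ)) =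
      x ⟨a, m.castSucc⟩ := by
    intro a m
    rw [AddMonoidAlgebra.lift_single, unitHom_castSucc, Algebra.smul_def, Units.val_mul,
      ← mul_assoc, IsUnit.mul_val_inv, one_mul, IsUnit.unit_spec]
  refine ⟨F, ?_⟩
  rintro ⟨a, j⟩
  refine Fin.lastCases ?_ (hc a) j
  have h1 := congrArg F (prod_ray n lam a)
  rw [map_prod, AlgHom.commutes, ← hx a, Fin.prod_univ_castSucc, Fin.prod_univ_castSucc] at h1
  simp only [hc] at h1
  refine IsUnit.mul_left_cancel ?_ h1
  exact (IsUnit.prod_univ_iff).2 fun m => hu _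

/-- The homomorphism `ρ : ℂ[X_{j,a}] → ℂ[ℤ^N]`,
`X_{j,a} ↦ exp(λ_{j,a}) · single (v_{j,a})`, induces an isomorphism of `ℂ`-algebras
from `ℂ[X_{j,a}]/(L + SR_Q)` onto `ℂ[ℤ^N]/J`, sending the class of `X_{j,a}` to the
class of `exp(λ_{j,a}) · single (v_{j,a})`.  This realizes, via the SYZ mirror
transformation, the isomorphism between the presentation of the small quantum
cohomology ring of `ℙ^{n₁} × ⋯ × ℙ^{n_l}` and the Jacobian ring of its mirror
superpotential. -/
theorem stmt9 (l : ℕ) (hl : 1 ≤ l) (n : Fin l → ℕ) (hn : ∀ a, 1 ≤ n a)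
    (lam : (Σ a : Fin l, Fin (n a + 1)) → ℝ) :
    ∃ e : (MvPolynomial (Σ a : Fin l, Fin (n a + 1)) ℂ ⧸ (Lideal l n + SRQideal l n lam))
        ≃ₐ[ℂ] (AddMonoidAlgebra ℂ (∀ a : Fin l, Fin (n a) → ℤ) ⧸ Jideal l n lam),
      ∀ p : Σ a : Fin l, Fin (n a + 1),
        e (Ideal.Quotient.mk (Lideal l n + SRQideal l n lam) (MvPolynomial.X p))
          = Ideal.Quotient.mk (Jideal l n lam)
              (AddMonoidAlgebra.single (rayGen n p) ((Real.exp (lam p) : ℝ) : ℂ)) := by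
  classical
  let r : (Σ a : Fin l, Fin (n a + 1)) → AddMonoidAlgebra ℂ (∀ a : Fin l, Fin (n a) → ℤ) :=
    fun p => AddMonoidAlgebra.single (rayGen n p) ((Real.exp (lam p) : ℝ) : ℂ)
  -- the forward map
  let G : MvPolynomial (Σ a : Fin l, Fin (n a + 1)) ℂ →ₐ[ℂ]
      (AddMonoidAlgebra ℂ (∀ a : Fin l, Fin (n a) → ℤ) ⧸ Jideal l n lam) :=
    (Ideal.Quotient.mkₐ ℂ (Jideal l n lam)).comp (MvPolynomial.aeval r)
  have hG : ∀ p, G (MvPolynomial.X p) = Ideal.Quotient.mk (Jideal l n lam) (r p) := by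
    intro p
    simp [G]
  have hGker : Lideal l n + SRQideal l n lam ≤ RingHom.ker G := by
    refine sup_le (Ideal.span_le.2 ?_) (Ideal.span_le.2 ?_)
    · rintro f ⟨a, j, rfl⟩
      rw [SetLike.mem_coe, RingHom.mem_ker, map_sub, hG, hG, ← map_sub,
        Ideal.Quotient.eq_zero_iff_mem]
      exact Ideal.subset_span ⟨a, j, (J_gen n lam a j).symm⟩
    · rintro f ⟨a, rfl⟩
      rw [SetLike.mem_coe, RingHom.mem_ker, map_sub, map_prod, sub_eq_zero]
      simp only [hG]
      rw [← map_prod, prod_ray]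
      exact (G.commutes _).symm
  let Φ := Ideal.Quotient.liftₐ (Lideal l n + SRQideal l n lam) G hGker
  have hΦ : ∀ p, Φ (Ideal.Quotient.mk _ (MvPolynomial.X p)) =
      Ideal.Quotient.mk (Jideal l n lam) (r p) := fun p => hG p
  -- the backward map
  obtain ⟨F, hF⟩ := exists_lift n lam
    (A := MvPolynomial (Σ a : Fin l, Fin (n a + 1)) ℂ ⧸ (Lideal l n + SRQideal l n lam))
    (fun p => Ideal.Quotient.mk _ (MvPolynomial.X p)) (by
      intro a
      rw [← map_prod]
      refine (Ideal.Quotient.eq.2 ?_ :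
        _ = Ideal.Quotient.mk (Lideal l n + SRQideal l n lam) (MvPolynomial.C _))
      exact Ideal.mem_sup_right (Ideal.subset_span ⟨a, rfl⟩))
  have hFker : Jideal l n lam ≤ RingHom.ker F := by
    refine Ideal.span_le.2 ?_
    rintro f ⟨b, m, rfl⟩
    rw [SetLike.mem_coe, RingHom.mem_ker, J_gen, map_sub, hF, hF, ← map_sub,
      Ideal.Quotient.eq_zero_iff_mem]
    exact Ideal.mem_sup_left (Ideal.subset_span ⟨b, m, rfl⟩)
  let Ψ := Ideal.Quotient.liftₐ (Jideal l n lam) F hFker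
  have hΨ : ∀ p, Ψ (Ideal.Quotient.mk _ (r p)) =
      Ideal.Quotient.mk _ (MvPolynomial.X p) := fun p => hF p
  have h1 : Φ.comp Ψ = AlgHom.id ℂ _ := by
    refine Ideal.Quotient.algHom_ext _ ?_
    refine (AddMonoidAlgebra.lift ℂ _ _).symm.injective ?_
    refine hom_ext_ray n _ _ fun a m => ?_
    have hs : AddMonoidAlgebra.single (rayGen n ⟨a, m.castSucc⟩) (1 : ℂ) =
        ((Real.exp (lam ⟨a, m.castSucc⟩) : ℝ) : ℂ)⁻¹ • r ⟨a, m.castSucc⟩ := by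
      have : ((Real.exp (lam ⟨a, m.castSucc⟩) : ℝ) : ℂ) ≠ 0 := by
        exact_mod_cast (Real.exp_pos _).ne'
      simp only [r, AddMonoidAlgebra.smul_single, smul_eq_mul]
      rw [inv_mul_cancel₀ this]
    have hr : Φ (Ψ (Ideal.Quotient.mkₐ ℂ (Jideal l n lam) (r ⟨a, m.castSucc⟩))) =
        Ideal.Quotient.mkₐ ℂ (Jideal l n lam) (r ⟨a, m.castSucc⟩) :=
      (congrArg Φ (hΨ _)).trans (hΦ _)
    change Φ (Ψ (Ideal.Quotient.mkₐ ℂ (Jideal l n lam) (AddMonoidAlgebra.single _ 1))) =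
      Ideal.Quotient.mkₐ ℂ (Jideal l n lam) (AddMonoidAlgebra.single _ 1)
    rw [toAdd_ofAdd, hs, map_smul, map_smul, map_smul, hr]
  have h2 : Ψ.comp Φ = AlgHom.id ℂ _ := by
    refine Ideal.Quotient.algHom_ext _ ?_
    refine MvPolynomial.algHom_ext fun p => ?_
    exact (congrArg Ψ (hΦ p)).trans (hΨ p)
  exact ⟨AlgEquiv.ofAlgHom Φ Ψ h1 h2, hΦ⟩
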